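/- Let λ₁, λ₂, u, v ∈ ℤ with gcd(u,v) = 1 and v dividing λ₁ − λ₂; let Λ = diag(λ₁, λ₂), M = [[1, u], [0, v]], and A = M·Λ·M⁻¹, and assume A ∈ M_2(ℤ) is non-singular with P(A) ≠ ∅ and P'(A) ≠ ∅. Assume every prime dividing λ₁ also divides λ₂, or every prime dividing λ₂ also divides λ₁. Then the group N⃗(X_A) = {T ∈ M_2(ℤ) : det T = ±1 and ∀ m ∈ ℕ ∃ k ∈ ℕ, A^{-m}·T·A^{k} ∈ M_2(ℤ)} (a group under matrix multiplication) is isomorphic as a group to the group of lower-triangular matrices in GL_2(ℤ), i.e., to {S ∈ M_2(ℤ) : S₁₂ = 0 and det S = ±1}. -/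

import Mathlib

open Matrix Polynomial

noncomputable section

/-- The matrix `A` viewed over `ℚ`. -/
def Aq {n : ℕ} (A : Matrix (Fin n) (Fin n) ℤ) : Matrix (Fin n) (Fin n) ℚ :=
  A.map (Int.cast : ℤ → ℚ)

/-- `P'(A)`: primes dividing `det A` such that `h_A ≢ x^n (mod p)`. -/
def Pbad {n : ℕ} (A : Matrix (Fin n) (Fin n) ℤ) : Set ℕ :=
  {p | p.Prime ∧ (p : ℤ) ∣ A.det ∧ A.charpoly.map (Int.castRingHom (ZMod p)) ≠ X ^ n}

/-- The matrix `M = [[1, u], [0, v]]` over `ℚ`. -/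
def M2q (u v : ℤ) : Matrix (Fin 2) (Fin 2) ℚ := !![1, (u : ℚ); 0, (v : ℚ)]

/-- Membership in the linear representation group `N⃗(X_A)`:
`det T = ±1` and for every `m` there is a `k` with `A⁻ᵐ T Aᵏ ∈ M_2(ℤ)`. -/
def Ncond (A T : Matrix (Fin 2) (Fin 2) ℤ) : Prop :=
  (T.det = 1 ∨ T.det = -1) ∧
    ∀ m : ℕ, ∃ k : ℕ, ∀ i j, ∃ z : ℤ,
      (((Aq A)⁻¹ ^ m * T.map (Int.cast : ℤ → ℚ) * (Aq A) ^ k) i j) = (z : ℚ)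

/-- Integral reformulation of the integrality condition. -/
lemma ncond_iff (A T : Matrix (Fin 2) (Fin 2) ℤ) (hA : A.det ≠ 0) :
    Ncond A T ↔ (T.det = 1 ∨ T.det = -1) ∧
      ∀ m : ℕ, ∃ k : ℕ, ∃ Z : Matrix (Fin 2) (Fin 2) ℤ, T * A ^ k = A ^ m * Z := by
  unfold Ncond
  refine and_congr_right fun _ => forall_congr' fun m => exists_congr fun k => ?_
  have hAq : Aq A = (Int.castRingHom ℚ).mapMatrix A := rfl
  have hTq : T.map (Int.cast : ℤ → ℚ) = (Int.castRingHom ℚ).mapMatrix T := rfl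
  have hdet : IsUnit (Aq A ^ m).det := by
    rw [hAq, ← map_pow, ← RingHom.map_det, isUnit_iff_ne_zero, Matrix.det_pow]
    simpa using fun h => absurd h hA
  have hinj : Function.Injective ((Int.castRingHom ℚ).mapMatrix :
      Matrix (Fin 2) (Fin 2) ℤ → Matrix (Fin 2) (Fin 2) ℚ) :=
    Matrix.map_injective (RingHom.injective_int (Int.castRingHom ℚ))
  rw [Matrix.inv_pow']
  constructor
  · intro h
    choose z hz using h
    refine ⟨Matrix.of z, hinj ?_⟩
    have : (Aq A ^ m)⁻¹ * T.map (Int.cast : ℤ → ℚ) * Aq A ^ k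
        = (Int.castRingHom ℚ).mapMatrix (Matrix.of z) := by
      ext i j
      rw [hz]; simp
    rw [map_mul, map_mul, map_pow, map_pow, ← this, ← hAq, ← hTq, Matrix.mul_assoc _ _ (Aq A ^ k),
      Matrix.mul_nonsing_inv_cancel_left _ _ hdet]
  · rintro ⟨Z, hZ⟩ i j
    refine ⟨Z i j, ?_⟩
    have h2 := congrArg (Int.castRingHom ℚ).mapMatrix hZ
    rw [map_mul, map_mul, map_pow, map_pow, ← hAq, ← hTq] at h2
    rw [Matrix.mul_assoc, h2, Matrix.nonsing_inv_mul_cancel_left _ _ hdet]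
    simp

lemma dvd_pow_of_primes (a b : ℤ) (ha : a ≠ 0)
    (h : ∀ p : ℕ, p.Prime → (p : ℤ) ∣ a → (p : ℤ) ∣ b) : ∃ K : ℕ, a ∣ b ^ K := by
  by_cases hb : b = 0
  · exact ⟨1, by simp [hb]⟩
  have h1 : a.natAbs.primeFactors ⊆ b.natAbs.primeFactors := by
    intro p hp
    rw [Nat.mem_primeFactors] at hp ⊢
    refine ⟨hp.1, ?_, by simpa using hb⟩
    exact Int.natCast_dvd.1 (h p hp.1 (Int.natCast_dvd.2 hp.2.1))
  refine ⟨a.natAbs, ?_⟩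
  rw [← Int.natAbs_dvd_natAbs, Int.natAbs_pow]
  have ha' : a.natAbs ≠ 0 := by simpa using ha
  have hb' : b.natAbs ≠ 0 := by simpa using hb
  rw [← Nat.factorization_le_iff_dvd ha' (pow_ne_zero _ hb')]
  intro p
  rw [Nat.factorization_pow]
  by_cases hp : p ∈ a.natAbs.primeFactors
  · have h3 := h1 hp
    rw [Nat.mem_primeFactors] at h3
    have h4 : 1 ≤ b.natAbs.factorization p := h3.1.factorization_pos_of_dvd hb' h3.2.1
    have h5 : a.natAbs.factorization p < a.natAbs := Nat.factorization_lt p ha'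
    simp only [Finsupp.smul_apply, smul_eq_mul]
    nlinarith
  · have : a.natAbs.factorization p = 0 := by
      rwa [← Nat.support_factorization, Finsupp.notMem_support_iff] at hp
    rw [this]; exact Nat.zero_le _

lemma pow_entries (B : Matrix (Fin 2) (Fin 2) ℤ) (h : B 0 1 = 0) (k : ℕ) :
    (B ^ k) 0 1 = 0 ∧ (B ^ k) 0 0 = B 0 0 ^ k ∧ (B ^ k) 1 1 = B 1 1 ^ k := by
  induction k with
  | zero => simp
  | succ k ih =>
    obtain ⟨h1, h2, h3⟩ := ih
    simp [pow_succ, Matrix.mul_apply, Fin.sum_univ_two, h1, h2, h3, h]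

lemma low_dvd (B : Matrix (Fin 2) (Fin 2) ℤ) (h : B 0 1 = 0) (K : ℕ)
    (hK : B 1 1 ∣ B 0 0 ^ K) (m : ℕ) :
    ∃ K0 : ℕ, ∀ k, K0 ≤ k → B 1 1 ^ m ∣ (B ^ k) 1 0 := by
  induction m with
  | zero => exact ⟨0, by simp⟩
  | succ m ih =>
    obtain ⟨K0, h0⟩ := ih
    refine ⟨max K0 (K * (m + 1)) + 1, fun k hk => ?_⟩
    obtain ⟨k, rfl⟩ : ∃ l, k = l + 1 := ⟨k - 1, by omega⟩
    have hk1 : K0 ≤ k := by omega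
    have hk2 : K * (m + 1) ≤ k := by omega
    rw [pow_succ' B, Matrix.mul_apply, Fin.sum_univ_two, (pow_entries B h k).2.1]
    refine dvd_add (Dvd.dvd.mul_left ?_ _) ?_
    · refine (pow_dvd_pow_of_dvd hK (m + 1)).trans ?_
      rw [← pow_mul]
      exact pow_dvd_pow _ hk2
    · rw [pow_succ']
      exact mul_dvd_mul_left _ (h0 k hk1)

lemma lower_iff (B T : Matrix (Fin 2) (Fin 2) ℤ) (h : B 0 1 = 0) (h11 : B 1 1 ≠ 0)
    (hp : ∀ p : ℕ, p.Prime → (p : ℤ) ∣ B 1 1 → (p : ℤ) ∣ B 0 0)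
    (hq : ∃ p : ℕ, p.Prime ∧ (p : ℤ) ∣ B 0 0 ∧ ¬ (p : ℤ) ∣ B 1 1) :
    (∀ m : ℕ, ∃ k : ℕ, ∃ Z : Matrix (Fin 2) (Fin 2) ℤ, T * B ^ k = B ^ m * Z) ↔ T 0 1 = 0 := by
  constructor
  · intro H
    obtain ⟨p, hpp, hp0, hp1⟩ := hq
    have hpi : Prime (p : ℤ) := Nat.prime_iff_prime_int.1 hpp
    by_contra hT
    have hall : ∀ m : ℕ, (p : ℤ) ^ m ∣ T 0 1 := by
      intro m
      obtain ⟨k, Z, hZ⟩ := H m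
      have e := congrFun (congrFun hZ 0) 1
      obtain ⟨a1, a2, a3⟩ := pow_entries B h k
      obtain ⟨b1, b2, b3⟩ := pow_entries B h m
      simp only [Matrix.mul_apply, Fin.sum_univ_two, a1, a3, b1, b2, mul_zero, zero_mul,
        zero_add, add_zero] at e
      have h1 : (p : ℤ) ^ m ∣ T 0 1 * B 1 1 ^ k := by
        rw [e]; exact (pow_dvd_pow_of_dvd hp0 m).mul_right _
      have hc : IsCoprime ((p : ℤ) ^ m) (B 1 1 ^ k) :=
        ((Prime.coprime_iff_not_dvd hpi).2 hp1).pow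
      exact hc.dvd_of_dvd_mul_right h1
    have hfin : FiniteMultiplicity (p : ℤ) (T 0 1) := by
      rw [Int.finiteMultiplicity_iff]
      exact ⟨by simpa using hpp.one_lt.ne', hT⟩
    obtain ⟨n, hn⟩ := hfin
    exact hn (hall _)
  · intro hT m
    obtain ⟨K, hK⟩ := dvd_pow_of_primes _ _ h11 hp
    obtain ⟨K0, hK0⟩ := low_dvd B h K hK m
    let k := m + (K0 + K * m)
    have hnu : ∀ j, K * m ≤ j → B 1 1 ^ m ∣ B 0 0 ^ j := fun j hj =>
      (pow_dvd_pow_of_dvd hK m).trans (by rw [← pow_mul]; exact pow_dvd_pow _ hj)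
    have hd : B 1 1 ^ m ∣ T 1 0 * B 0 0 ^ k + T 1 1 * (B ^ k) 1 0
        - (B ^ m) 1 0 * (T 0 0 * B 0 0 ^ (K0 + K * m)) := by
      refine dvd_sub (dvd_add ?_ ?_) ?_
      · exact (hnu _ (by omega)).mul_left _
      · exact (hK0 _ (by omega)).mul_left _
      · exact ((hnu _ (by omega)).mul_left _).mul_left _
    obtain ⟨y, hy⟩ := hd
    refine ⟨k, !![T 0 0 * B 0 0 ^ (K0 + K * m), 0; y, T 1 1 * B 1 1 ^ (K0 + K * m)], ?_⟩
    obtain ⟨a1, a2, a3⟩ := pow_entries B h k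
    obtain ⟨b1, b2, b3⟩ := pow_entries B h m
    have hk : ∀ x : ℤ, x ^ k = x ^ m * x ^ (K0 + K * m) := fun x => pow_add _ _ _
    ext i j
    fin_cases i <;> fin_cases j <;>
      simp [Matrix.mul_apply, Fin.sum_univ_two, a1, a2, a3, b1, b2, b3, hT]
    · rw [hk]; ring
    · linear_combination hy
    · rw [hk]; ring

/-- Lower triangular integer matrices. -/
def lowGrp : Subgroup (Matrix (Fin 2) (Fin 2) ℤ)ˣ where
  carrier := {S | (S : Matrix (Fin 2) (Fin 2) ℤ) 0 1 = 0}
  one_mem' := by simp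
  mul_mem' := by
    intro a b ha hb
    simp only [Set.mem_ofPred_eq] at *
    simp [Matrix.mul_apply, Fin.sum_univ_two, ha, hb]
  inv_mem' := by
    intro S hS
    simp only [Set.mem_ofPred_eq] at *
    have h := S.mul_inv
    have h0 := congrFun (congrFun h 0) 0
    have h1 := congrFun (congrFun h 0) 1
    simp [Matrix.mul_apply, Fin.sum_univ_two, hS, -Units.mul_inv, -Matrix.coe_units_inv] at h0 h1
    rcases h1 with h1 | h1
    · simp [h1] at h0
    · exact h1

lemma main_aux (A B : Matrix (Fin 2) (Fin 2) ℤ) (g : (Matrix (Fin 2) (Fin 2) ℤ)ˣ)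
    (hA : A.det ≠ 0) (hg : A * (g : Matrix (Fin 2) (Fin 2) ℤ) = g * B)
    (h : B 0 1 = 0) (h11 : B 1 1 ≠ 0)
    (hp : ∀ p : ℕ, p.Prime → (p : ℤ) ∣ B 1 1 → (p : ℤ) ∣ B 0 0)
    (hq : ∃ p : ℕ, p.Prime ∧ (p : ℤ) ∣ B 0 0 ∧ ¬ (p : ℤ) ∣ B 1 1) :
    ∃ H L : Subgroup (Matrix (Fin 2) (Fin 2) ℤ)ˣ,
      (∀ T : (Matrix (Fin 2) (Fin 2) ℤ)ˣ, T ∈ H ↔ Ncond A (T : Matrix (Fin 2) (Fin 2) ℤ)) ∧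
      (∀ S : (Matrix (Fin 2) (Fin 2) ℤ)ˣ, S ∈ L ↔ (S : Matrix (Fin 2) (Fin 2) ℤ) 0 1 = 0) ∧
      Nonempty (H ≃* L) := by
  refine ⟨lowGrp.map (MulAut.conj g).toMonoidHom, lowGrp, ?_, fun S => Iff.rfl,
    ⟨(lowGrp.equivMapOfInjective _ (MulAut.conj g).injective).symm⟩⟩
  intro T
  have hpow : ∀ k : ℕ, A ^ k * (g : Matrix (Fin 2) (Fin 2) ℤ) = g * B ^ k := fun k =>
    (SemiconjBy.pow_right (show SemiconjBy (g : Matrix (Fin 2) (Fin 2) ℤ) B A from hg.symm) k).eq.symm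
  have h1 : T ∈ lowGrp.map (MulAut.conj g).toMonoidHom ↔ g⁻¹ * T * g ∈ lowGrp := by
    constructor
    · rintro ⟨S, hS, rfl⟩
      simpa [mul_assoc] using hS
    · intro hS
      exact ⟨_, hS, by simp [mul_assoc]⟩
  have hdet : (T : Matrix (Fin 2) (Fin 2) ℤ).det = 1 ∨ (T : Matrix (Fin 2) (Fin 2) ℤ).det = -1 :=
    Int.isUnit_iff.1 ((Matrix.isUnit_iff_isUnit_det _).1 T.isUnit)
  rw [h1, ncond_iff A _ hA, and_iff_right hdet]
  refine (lower_iff B ((g⁻¹ * T * g : (Matrix (Fin 2) (Fin 2) ℤ)ˣ)) h h11 hp hq).symm.trans ?_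
  refine forall_congr' fun m => exists_congr fun k => ?_
  constructor
  · rintro ⟨Z, hZ⟩
    refine ⟨g * Z * (g⁻¹ : (Matrix (Fin 2) (Fin 2) ℤ)ˣ), ?_⟩
    rw [← Units.mul_left_inj g]
    calc (T : Matrix (Fin 2) (Fin 2) ℤ) * A ^ k * g
        = g * ((g⁻¹ * T * g : (Matrix (Fin 2) (Fin 2) ℤ)ˣ) * B ^ k) := by
          rw [mul_assoc, hpow]
          simp only [Units.val_mul, mul_assoc, Units.mul_inv_cancel_left]
      _ = _ := by
          rw [hZ, ← mul_assoc, ← hpow]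
          simp only [mul_assoc, Units.inv_mul, mul_one]
  · rintro ⟨Z, hZ⟩
    refine ⟨(g⁻¹ : (Matrix (Fin 2) (Fin 2) ℤ)ˣ) * Z * g, ?_⟩
    rw [← Units.mul_right_inj g]
    calc g * ((g⁻¹ * T * g : (Matrix (Fin 2) (Fin 2) ℤ)ˣ) * B ^ k)
        = (T : Matrix (Fin 2) (Fin 2) ℤ) * A ^ k * g := by
          rw [mul_assoc _ (A ^ k), hpow]
          simp only [Units.val_mul, mul_assoc, Units.mul_inv_cancel_left]
      _ = _ := by
          rw [hZ, ← mul_assoc (g : Matrix (Fin 2) (Fin 2) ℤ), ← hpow]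
          simp only [mul_assoc, Units.mul_inv_cancel_left]

/-- in case (c), `N⃗(X_A)` is isomorphic to the group of
lower-triangular matrices in `GL_2(ℤ)`. -/
theorem stmt19 (lam1 lam2 u v : ℤ) (hcop : Int.gcd u v = 1) (hdvd : v ∣ lam1 - lam2)
    (A : Matrix (Fin 2) (Fin 2) ℤ) (hA : A.det ≠ 0)
    (hAform : Aq A = M2q u v * !![(lam1 : ℚ), 0; 0, (lam2 : ℚ)] * (M2q u v)⁻¹)
    (hP : ∃ p : ℕ, p.Prime ∧ (p : ℤ) ∣ A.det)
    (hP' : (Pbad A).Nonempty)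
    (hrad : (∀ p : ℕ, p.Prime → (p : ℤ) ∣ lam1 → (p : ℤ) ∣ lam2) ∨
      (∀ p : ℕ, p.Prime → (p : ℤ) ∣ lam2 → (p : ℤ) ∣ lam1)) :
    ∃ H L : Subgroup (Matrix (Fin 2) (Fin 2) ℤ)ˣ,
      (∀ T : (Matrix (Fin 2) (Fin 2) ℤ)ˣ, T ∈ H ↔ Ncond A (T : Matrix (Fin 2) (Fin 2) ℤ)) ∧
      (∀ S : (Matrix (Fin 2) (Fin 2) ℤ)ˣ, S ∈ L ↔ (S : Matrix (Fin 2) (Fin 2) ℤ) 0 1 = 0) ∧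
      Nonempty (H ≃* L) := by
  have hMdet : (M2q u v).det = (v : ℚ) := by simp [M2q, Matrix.det_fin_two]
  have hv : v ≠ 0 := by
    rintro rfl
    apply hA
    have h0 : (Aq A).det = 0 := by rw [hAform]; simp [hMdet]
    have h1 : (Aq A).det = ((A.det : ℤ) : ℚ) := by
      simp [Aq, Matrix.det_fin_two]
    rw [h1] at h0
    exact_mod_cast h0
  have hvq : (v : ℚ) ≠ 0 := by exact_mod_cast hv
  have hmul : Aq A * M2q u v = M2q u v * !![(lam1 : ℚ), 0; 0, (lam2 : ℚ)] := by
    rw [hAform, Matrix.nonsing_inv_mul_cancel_right]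
    rw [hMdet]; exact isUnit_iff_ne_zero.2 hvq
  have e00 := congrFun (congrFun hmul 0) 0
  have e01 := congrFun (congrFun hmul 0) 1
  have e10 := congrFun (congrFun hmul 1) 0
  have e11 := congrFun (congrFun hmul 1) 1
  simp [Aq, M2q, Matrix.mul_apply, Fin.sum_univ_two] at e00 e01 e10 e11
  rw [e10] at e11
  have a00 : A 0 0 = lam1 := by exact_mod_cast e00
  have a10 : A 1 0 = 0 := by exact_mod_cast e10
  have a01 : A 0 0 * u + A 0 1 * v = u * lam2 := by exact_mod_cast e01
  have a11 : A 1 1 = lam2 := by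
    have : A 1 1 * v = v * lam2 := by
      have : (A 1 1 : ℚ) * v = v * lam2 := by simpa using e11
      exact_mod_cast this
    apply mul_right_cancel₀ hv
    rw [this, mul_comm]
  have hAd : A.det = lam1 * lam2 := by rw [Matrix.det_fin_two, a00, a10, a11]; ring
  have hl1 : lam1 ≠ 0 := by rintro rfl; simp [hAd] at hA
  have hl2 : lam2 ≠ 0 := by rintro rfl; simp [hAd] at hA
  obtain ⟨p, hpp, hpd, hpc⟩ := hP'
  have hpi : Prime (p : ℤ) := Nat.prime_iff_prime_int.1 hpp
  have hnot : ¬ ((p : ℤ) ∣ lam1 ∧ (p : ℤ) ∣ lam2) := by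
    rintro ⟨h1, h2⟩
    apply hpc
    have z1 : ((lam1 : ℤ) : ZMod p) = 0 := (ZMod.intCast_zmod_eq_zero_iff_dvd _ _).2 h1
    have z2 : ((lam2 : ℤ) : ZMod p) = 0 := (ZMod.intCast_zmod_eq_zero_iff_dvd _ _).2 h2
    have : Fact p.Prime := ⟨hpp⟩
    have w1 : ((lam1 : ℤ) : (ZMod p)[X]) = 0 := by rw [← Polynomial.C_eq_intCast, z1, map_zero]
    have w2 : ((lam2 : ℤ) : (ZMod p)[X]) = 0 := by rw [← Polynomial.C_eq_intCast, z2, map_zero]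
    rw [Matrix.charpoly_fin_two, hAd, Matrix.trace_fin_two, a00, a11]
    simp [w1, w2]
  rw [hAd] at hpd
  have hor := hpi.dvd_or_dvd hpd
  rcases hrad with hrad | hrad
  · have hsw : (!![0, 1; 1, 0] : Matrix (Fin 2) (Fin 2) ℤ) * !![0, 1; 1, 0] = 1 := by
      ext i j; fin_cases i <;> fin_cases j <;> simp [Matrix.mul_apply, Fin.sum_univ_two]
    refine main_aux A !![lam2, 0; A 0 1, lam1] ⟨!![0, 1; 1, 0], !![0, 1; 1, 0], hsw, hsw⟩ hA
      ?_ (by simp) (by simpa using hl1) (by simpa using hrad) ⟨p, hpp, ?_⟩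
    · ext i j
      fin_cases i <;> fin_cases j <;>
        simp [Matrix.mul_apply, Fin.sum_univ_two, a00, a10, a11]
    · have := hrad p hpp
      simp
      tauto
  · obtain ⟨x, y, hxy⟩ : ∃ x y : ℤ, x * v - y * u = 1 := by
      refine ⟨Int.gcdB u v, - Int.gcdA u v, ?_⟩
      have := Int.gcd_eq_gcd_ab u v
      rw [hcop] at this
      push_cast at this
      linear_combination -this
    have hg1 : (!![x, u; y, v] : Matrix (Fin 2) (Fin 2) ℤ) * !![v, -u; -y, x] = 1 := by
      ext i j; fin_cases i <;> fin_cases j <;> simp [Matrix.mul_apply, Fin.sum_univ_two] <;>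
        first | linear_combination hxy | ring
    have hg2 : (!![v, -u; -y, x] : Matrix (Fin 2) (Fin 2) ℤ) * !![x, u; y, v] = 1 := by
      ext i j; fin_cases i <;> fin_cases j <;> simp [Matrix.mul_apply, Fin.sum_univ_two] <;>
        first | linear_combination hxy | ring
    rw [a00] at a01
    refine main_aux A !![lam1, 0; -y * (lam1 * x + A 0 1 * y) + x * (lam2 * y), lam2]
      ⟨!![x, u; y, v], !![v, -u; -y, x], hg1, hg2⟩ hA
      ?_ (by simp) (by simpa using hl2) (by simpa using hrad) ⟨p, hpp, ?_⟩
    · ext i j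
      fin_cases i <;> fin_cases j <;>
        simp [Matrix.mul_apply, Fin.sum_univ_two, a00, a10, a11]
      · linear_combination (-(lam1 * x) - A 0 1 * y) * hxy + x * y * a01 + lam1 * x * hxy
      · linear_combination a01
      · linear_combination (-(lam2 * y)) * hxy + y * y * a01 + y * lam1 * hxy
      · ring
    · have := hrad p hpp
      simp
      tauto
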